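/- The algebra 𝔏₁₂ degenerates to 𝔏₁: the structure λ with table e₁e₂ = e₃, e₁e₃ = e₄, e₂e₁ = −e₃, e₃e₁ = −e₄ lies in the closure of the GL(V)-orbit of the structure μ with table e₁e₁ = e₄, e₁e₂ = −e₃, e₁e₃ = −e₄, e₂e₁ = e₃, e₃e₁ = e₄. -/

import Mathlib

noncomputable section

/-- `V = ℂ⁴`. -/
abbrev V : Type := Fin 4 → ℂ

/-- The standard basis vectors `e₁, e₂, e₃, e₄` of `V` (indexed by `0, 1, 2, 3`). -/
def e (i : Fin 4) : V := Pi.single i 1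

/-- The `GL(V)`-orbit `O(μ)` of an algebra structure `μ` on `V`, for the action
`(g • μ)(x, y) = g (μ (g⁻¹ x) (g⁻¹ y))`. -/
def orbit (μ : V →L[ℂ] V →L[ℂ] V) : Set (V →L[ℂ] V →L[ℂ] V) :=
  {ν | ∃ g : V ≃L[ℂ] V, ∀ x y : V, ν x y = g (μ (g.symm x) (g.symm y))}

theorem line_tendsto {E : Type*} [NormedAddCommGroup E] [NormedSpace ℂ E] (a b : E) :
    Filter.Tendsto (fun t : ℂ => a + t • b) (nhdsWithin 0 {0}ᶜ) (nhds a) := by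
  have hc : Continuous (fun t : ℂ => a + t • b) := by fun_prop
  have h := (hc.tendsto 0).mono_left (nhdsWithin_le_nhds (s := {0}ᶜ))
  simpa using h

theorem vdecomp (x : V) : x = x 0 • e 0 + x 1 • e 1 + x 2 • e 2 + x 3 • e 3 := by
  ext i
  fin_cases i <;> simp [e]

/-- The diagonal map `diag(-1, t, t, t)`. -/
def gt (t : ℂ) (ht : t ≠ 0) : V ≃ₗ[ℂ] V where
  toFun x := ![-x 0, t * x 1, t * x 2, t * x 3]
  invFun x := ![-x 0, t⁻¹ * x 1, t⁻¹ * x 2, t⁻¹ * x 3]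
  map_add' x y := by
    ext i
    fin_cases i <;> simp <;> ring
  map_smul' c x := by
    ext i
    fin_cases i <;> simp <;> ring
  left_inv x := by
    ext i
    fin_cases i <;> simp [ht]
  right_inv x := by
    ext i
    fin_cases i <;> simp [ht]

/-- 𝔏₁₂ degenerates to 𝔏₁. -/
theorem stmt17 (μ lam : V →L[ℂ] V →L[ℂ] V)
    (hμ : ∀ i j : Fin 4, μ (e i) (e j) =
    (![
      ![e 3, -e 2, -e 3, 0],
      ![e 2, 0, 0, 0],
      ![e 3, 0, 0, 0],
      ![0, 0, 0, 0]
     ] : Fin 4 → Fin 4 → V) i j)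
    (hlam : ∀ i j : Fin 4, lam (e i) (e j) =
    (![
      ![0, e 2, e 3, 0],
      ![-e 2, 0, 0, 0],
      ![-e 3, 0, 0, 0],
      ![0, 0, 0, 0]
     ] : Fin 4 → Fin 4 → V) i j) :
    lam ∈ closure (orbit μ) := by
  have fμ : ∀ x y : V, μ x y =
      ![0, 0, x 1 * y 0 - x 0 * y 1, x 0 * y 0 - x 0 * y 2 + x 2 * y 0] := by
    intro x y
    conv_lhs => rw [vdecomp x, vdecomp y]
    simp only [map_add, map_smul, add_apply, smul_apply, hμ]
    ext i
    fin_cases i <;> simp [e] <;> ring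
  have fl : ∀ x y : V, lam x y =
      ![0, 0, x 0 * y 1 - x 1 * y 0, x 0 * y 2 - x 2 * y 0] := by
    intro x y
    conv_lhs => rw [vdecomp x, vdecomp y]
    simp only [map_add, map_smul, add_apply, smul_apply, hlam]
    ext i
    fin_cases i <;> simp [e] <;> ring
  have h0 : Filter.Tendsto (fun t : ℂ => lam + t • (μ + lam)) (nhdsWithin 0 {0}ᶜ) (nhds lam) :=
    line_tendsto lam (μ + lam)
  refine mem_closure_of_tendsto h0 ?_
  filter_upwards [self_mem_nhdsWithin] with t ht
  have ht : t ≠ 0 := ht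
  refine ⟨(gt t ht).toContinuousLinearEquiv, fun x y => ?_⟩
  change lam x y + t • (μ x y + lam x y) =
    (gt t ht) (μ ((gt t ht).symm x) ((gt t ht).symm y))
  have hg : ∀ x, gt t ht x = ![-x 0, t * x 1, t * x 2, t * x 3] := fun _ => rfl
  have hs : ∀ x, (gt t ht).symm x = ![-x 0, t⁻¹ * x 1, t⁻¹ * x 2, t⁻¹ * x 3] := fun _ => rfl
  rw [fμ, fμ, fl, hg, hs, hs]
  ext i
  fin_cases i <;> simp <;> field_simp <;> ring
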